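/- For any event structure E, the undirected Hasse diagram of its domain (D(E), ⊆) — the simple graph whose vertices are the configurations of E, two configurations being adjacent if and only if one is obtained from the other by adding a single event — is a median graph. -/

import Mathlib

/-!
Configurations sit isometrically in the hypercube of all sets of events: from one configuration one
reaches another by first dropping maximal superfluous events and then adding minimal missing ones,
so the graph distance is the size of the symmetric difference. Hence `m` lies between `c` and `d` in
the graph iff `c ∩ d ⊆ m ⊆ c ∪ d`, and three such conditions pin `m` down to the majority
`x ∩ y ∪ y ∩ z ∪ z ∩ x`. The majority is again a configuration because any two of its elements lie
together in one of `x`, `y`, `z`, which rules out a conflict.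
-/

/-- An event structure `(E, ≤, #)`. -/
structure EventStructure where
  E : Type
  le : E → E → Prop
  le_refl : ∀ e, le e e
  le_trans : ∀ e₁ e₂ e₃, le e₁ e₂ → le e₂ e₃ → le e₁ e₃
  le_antisymm : ∀ e₁ e₂, le e₁ e₂ → le e₂ e₁ → e₁ = e₂
  finite_below : ∀ e, {e' | le e' e}.Finite
  conflict : E → E → Prop
  conflict_irrefl : ∀ e, ¬ conflict e e
  conflict_symm : ∀ e₁ e₂, conflict e₁ e₂ → conflict e₂ e₁
  conflict_hereditary : ∀ e₁ e₂ e₃, conflict e₁ e₂ → le e₂ e₃ → conflict e₁ e₃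

/-- A configuration: a finite, downward-closed, conflict-free set of events. -/
def EventStructure.IsConfig (ES : EventStructure) (c : Set ES.E) : Prop :=
  c.Finite ∧ (∀ e ∈ c, ∀ e', ES.le e' e → e' ∈ c) ∧
    ∀ e ∈ c, ∀ e' ∈ c, ¬ ES.conflict e e'

/-- The configurations of an event structure. -/
def EventStructure.Config (ES : EventStructure) : Type :=
  {c : Set ES.E // ES.IsConfig c}

/-- The undirected Hasse diagram of the domain `(D(E), ⊆)`: two configurations are
adjacent iff one is obtained from the other by adding a single event. -/
def domainGraph (ES : EventStructure) : SimpleGraph ES.Config where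
  Adj c c' := (∃ e ∉ c.1, c'.1 = insert e c.1) ∨ (∃ e ∉ c'.1, c.1 = insert e c'.1)
  symm := by
    constructor
    intro c c' h
    rcases h with h | h
    · exact Or.inr h
    · exact Or.inl h
  loopless := by
    constructor
    intro c h
    rcases h with ⟨e, he, heq⟩ | ⟨e, he, heq⟩ <;>
      · apply he
        rw [heq]
        exact Set.mem_insert _ _

/-- The interval `I(u,v)` in a graph. -/
def gInterval {V : Type} (G : SimpleGraph V) (u v : V) : Set V :=
  {w | G.dist u w + G.dist w v = G.dist u v}

/-- A median graph: a connected graph in which every triple of vertices has a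
unique median. -/
def IsMedianGraph {V : Type} (G : SimpleGraph V) : Prop :=
  G.Connected ∧ ∀ x y z : V, ∃! m : V,
    m ∈ gInterval G x y ∧ m ∈ gInterval G y z ∧ m ∈ gInterval G z x

open scoped symmDiff

section Lattice

variable {β : Type*}

/-- The ternary median operation of a lattice; on sets it is the majority vote. -/
def latticeMedian [Lattice β] (x y z : β) : β :=
  x ⊓ y ⊔ y ⊓ z ⊔ z ⊓ x

theorem latticeMedian_eq_inf_sup [DistribLattice β] (x y z : β) :
    latticeMedian x y z = (x ⊔ y) ⊓ (y ⊔ z) ⊓ (z ⊔ x) :=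
  calc x ⊓ y ⊔ y ⊓ z ⊔ z ⊓ x
      = y ⊓ (z ⊔ x) ⊔ z ⊓ x ⊓ (z ⊔ x) := by
        rw [inf_sup_left, inf_eq_left.2 (inf_le_left.trans le_sup_left : z ⊓ x ≤ z ⊔ x),
          inf_comm x y, sup_comm (y ⊓ x)]
    _ = (y ⊔ z ⊓ x) ⊓ (z ⊔ x) := (inf_sup_right _ _ _).symm
    _ = (x ⊔ y) ⊓ (y ⊔ z) ⊓ (z ⊔ x) := by
        rw [sup_inf_left, inf_comm (y ⊔ z), sup_comm y x]

theorem eq_latticeMedian_iff [DistribLattice β] {m x y z : β} :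
    m = latticeMedian x y z ↔ m ∈ Set.Icc (x ⊓ y) (x ⊔ y) ∧ m ∈ Set.Icc (y ⊓ z) (y ⊔ z) ∧
      m ∈ Set.Icc (z ⊓ x) (z ⊔ x) := by
  constructor
  · rintro rfl
    refine ⟨⟨?_, ?_⟩, ⟨?_, ?_⟩, ?_, ?_⟩
    · exact le_sup_of_le_left le_sup_left
    · exact (latticeMedian_eq_inf_sup x y z).trans_le (inf_le_of_left_le inf_le_left)
    · exact le_sup_of_le_left le_sup_right
    · exact (latticeMedian_eq_inf_sup x y z).trans_le (inf_le_of_left_le inf_le_right)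
    · exact le_sup_right
    · exact (latticeMedian_eq_inf_sup x y z).trans_le inf_le_right
  · rintro ⟨hxy, hyz, hzx⟩
    apply le_antisymm
    · rw [latticeMedian_eq_inf_sup]
      exact le_inf (le_inf hxy.2 hyz.2) hzx.2
    · exact sup_le (sup_le hxy.1 hyz.1) hzx.1

theorem disjoint_symmDiff_symmDiff_iff_mem_Icc [GeneralizedBooleanAlgebra β] {a m b : β} :
    Disjoint (a ∆ m) (m ∆ b) ↔ m ∈ Set.Icc (a ⊓ b) (a ⊔ b) := by
  have hinf : Disjoint (a \ m) (b \ m) ↔ a ⊓ b ≤ m := by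
    rw [disjoint_iff, ← inf_sdiff, sdiff_eq_bot_iff]
  have hsup : Disjoint (m \ a) (m \ b) ↔ m ≤ a ⊔ b := by
    rw [disjoint_iff, ← sdiff_sup, sdiff_eq_bot_iff]
  have ham : Disjoint (a \ m) (m \ b) := disjoint_sdiff_self_left.mono_right sdiff_le
  have hmb : Disjoint (m \ a) (b \ m) := disjoint_sdiff_self_right.mono_left sdiff_le
  simp only [symmDiff, disjoint_sup_left, disjoint_sup_right, hinf, hsup, ham, hmb, true_and,
    Set.mem_Icc, and_comm]

end Lattice

section SymmDiff

variable {α : Type*} {s t : Set α}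

theorem symmDiff_eq_singleton_iff {e : α} :
    s ∆ t = {e} ↔ (e ∉ s ∧ t = insert e s) ∨ (e ∉ t ∧ s = insert e t) := by
  simp only [Set.ext_iff, Set.mem_symmDiff, Set.mem_singleton_iff, Set.mem_insert_iff]
  grind

theorem ncard_add_ncard_eq_ncard_symmDiff_iff (hs : s.Finite) (ht : t.Finite) :
    s.ncard + t.ncard = (s ∆ t).ncard ↔ Disjoint s t := by
  refine ⟨fun h => ?_, fun h => ?_⟩
  · have hle : (s ∆ t).ncard ≤ (s ∪ t).ncard :=
      Set.ncard_le_ncard Set.symmDiff_subset_union (hs.union ht)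
    exact (Set.ncard_union_eq_iff hs ht).1 ((Set.ncard_union_le s t).antisymm (h.trans_le hle))
  · rw [h.symmDiff_eq_sup]
    exact (Set.ncard_union_eq h hs ht).symm

end SymmDiff

section WellGraded

variable {V α : Type*}

/-- The family of sets `f v` is well-graded and `G` is its graph: vertices are adjacent when their
sets differ in one element, and one can move from any `f u` towards any other `f v` within the
family by changing one element at a time. -/
structure IsWellGraded (G : SimpleGraph V) (f : V → Set α) : Prop where
  adj_iff : ∀ u v, G.Adj u v ↔ ∃ e, f u ∆ f v = {e}
  finite_symmDiff : ∀ u v, (f u ∆ f v).Finite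
  exists_step : ∀ u v, u ≠ v → ∃ w, ∃ e ∈ f u ∆ f v, f u ∆ f w = {e}

namespace IsWellGraded

variable {G : SimpleGraph V} {f : V → Set α}

theorem injective (h : IsWellGraded G f) : Function.Injective f := by
  intro u v huv
  by_contra hne
  obtain ⟨w, e, he, -⟩ := h.exists_step u v hne
  simp only [huv, symmDiff_self, Set.bot_eq_empty, Set.mem_empty_iff_false] at he

theorem exists_walk_length_eq (h : IsWellGraded G f) (u v : V) :
    ∃ p : G.Walk u v, p.length = (f u ∆ f v).ncard := by
  induction hn : (f u ∆ f v).ncard generalizing u with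
  | zero =>
    rw [Set.ncard_eq_zero (h.finite_symmDiff u v), Set.symmDiff_eq_empty] at hn
    obtain rfl := h.injective hn
    exact ⟨.nil, rfl⟩
  | succ n ih =>
    have hne : u ≠ v := by
      rintro rfl
      simp at hn
    obtain ⟨w, e, he, hw⟩ := h.exists_step u v hne
    have hwv : f w ∆ f v = (f u ∆ f v) \ {e} :=
      calc f w ∆ f v = (f u ∆ f w) ∆ (f u ∆ f v) := by
            rw [symmDiff_comm (f u) (f w), symmDiff_assoc, symmDiff_symmDiff_cancel_left]
        _ = (f u ∆ f v) \ {e} := by rw [hw, symmDiff_of_le (Set.singleton_subset_iff.2 he)]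
    have hcard : (f w ∆ f v).ncard = n := by
      rw [hwv, Set.ncard_sdiff_singleton_of_mem he, hn, Nat.add_sub_cancel]
    obtain ⟨p, hp⟩ := ih w hcard
    exact ⟨.cons ((h.adj_iff u w).2 ⟨e, hw⟩) p, by rw [SimpleGraph.Walk.length_cons, hp]⟩

theorem ncard_symmDiff_le_length (h : IsWellGraded G f) {u v : V} (p : G.Walk u v) :
    (f u ∆ f v).ncard ≤ p.length := by
  induction p with
  | nil => simp
  | @cons u w v huw p ih =>
    obtain ⟨e, he⟩ := (h.adj_iff u w).1 huw
    calc (f u ∆ f v).ncard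
        ≤ (f u ∆ f w ∪ f w ∆ f v).ncard :=
          Set.ncard_le_ncard (symmDiff_triangle _ _ _)
            ((h.finite_symmDiff u w).union (h.finite_symmDiff w v))
      _ ≤ (f u ∆ f w).ncard + (f w ∆ f v).ncard := Set.ncard_union_le _ _
      _ ≤ 1 + p.length := by rw [he, Set.ncard_singleton]; gcongr
      _ = (SimpleGraph.Walk.cons huw p).length := by rw [SimpleGraph.Walk.length_cons, add_comm]

theorem connected [Nonempty V] (h : IsWellGraded G f) : G.Connected :=
  ⟨fun u v => (h.exists_walk_length_eq u v).nonempty⟩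

theorem dist_eq (h : IsWellGraded G f) (u v : V) : G.dist u v = (f u ∆ f v).ncard := by
  obtain ⟨p, hp⟩ := h.exists_walk_length_eq u v
  obtain ⟨q, hq⟩ := p.reachable.exists_walk_length_eq_dist
  exact (hp ▸ SimpleGraph.dist_le p).antisymm (hq ▸ h.ncard_symmDiff_le_length q)

theorem mem_gInterval_iff {V : Type} {G : SimpleGraph V} {f : V → Set α} (h : IsWellGraded G f)
    {u v w : V} : w ∈ gInterval G u v ↔ f w ∈ Set.Icc (f u ⊓ f v) (f u ⊔ f v) := by
  have htri : (f u ∆ f w) ∆ (f w ∆ f v) = f u ∆ f v := by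
    rw [symmDiff_assoc, symmDiff_symmDiff_cancel_left]
  rw [← disjoint_symmDiff_symmDiff_iff_mem_Icc,
    ← ncard_add_ncard_eq_ncard_symmDiff_iff (h.finite_symmDiff u w) (h.finite_symmDiff w v), htri]
  simp only [gInterval, Set.mem_ofPred_eq, h.dist_eq]

end IsWellGraded

end WellGraded

theorem domainGraph_isMedian_general {V : Type} {α : Type*} [Nonempty V] {G : SimpleGraph V}
    {f : V → Set α} (h : IsWellGraded G f)
    (hmedian : ∀ x y z, ∃ m, f m = latticeMedian (f x) (f y) (f z)) : IsMedianGraph G := by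
  refine ⟨h.connected, fun x y z => ?_⟩
  simp only [h.mem_gInterval_iff, ← eq_latticeMedian_iff]
  obtain ⟨m, hm⟩ := hmedian x y z
  exact ⟨m, hm, fun m' hm' => h.injective (hm'.trans hm.symm)⟩

namespace EventStructure

variable {ES : EventStructure} {c d : Set ES.E}

instance : PartialOrder ES.E where
  le := ES.le
  le_refl := ES.le_refl
  le_trans := ES.le_trans
  le_antisymm := ES.le_antisymm

theorem IsConfig.isLowerSet (hc : ES.IsConfig c) : IsLowerSet c :=
  fun e e' hle he => hc.2.1 e he e' hle

theorem isConfig_empty : ES.IsConfig ∅ :=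
  ⟨Set.finite_empty, fun _ h => h.elim, fun _ h => h.elim⟩

instance : Nonempty ES.Config :=
  ⟨⟨∅, isConfig_empty⟩⟩

theorem IsConfig.of_subset (hd : ES.IsConfig d) (hcd : c ⊆ d) (hc : IsLowerSet c) :
    ES.IsConfig c :=
  ⟨hd.1.subset hcd, fun _ he _ hle => hc hle he,
    fun e he e' he' => hd.2.2 e (hcd he) e' (hcd he')⟩

theorem IsConfig.exists_sdiff_singleton (hc : ES.IsConfig c) (hd : IsLowerSet d)
    (hcd : ¬ c ⊆ d) : ∃ e ∈ c \ d, ES.IsConfig (c \ {e}) := by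
  obtain ⟨e, he⟩ := (hc.1.sdiff (t := d)).exists_maximal (Set.sdiff_nonempty.2 hcd)
  refine ⟨e, he.prop, hc.of_subset Set.sdiff_subset (hc.isLowerSet.erase ?_)⟩
  intro e' he' hle
  exact he.eq_of_ge ⟨he', fun hd' => he.prop.2 (hd hle hd')⟩ hle

theorem IsConfig.exists_insert (hd : ES.IsConfig d) (hc : IsLowerSet c) (hcd : c ⊂ d) :
    ∃ e ∈ d \ c, ES.IsConfig (insert e c) := by
  obtain ⟨e, he⟩ := (hd.1.sdiff (t := c)).exists_minimal (Set.nonempty_of_ssubset hcd)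
  refine ⟨e, he.prop, hd.of_subset (Set.insert_subset he.prop.1 hcd.subset) ?_⟩
  rintro a b hle (rfl | ha)
  · by_cases hb : b ∈ c
    · exact Or.inr hb
    · exact Or.inl (he.eq_of_le ⟨hd.isLowerSet hle he.prop.1, hb⟩ hle)
  · exact Or.inr (hc hle ha)

theorem IsConfig.median {x y z : Set ES.E} (hx : ES.IsConfig x) (hy : ES.IsConfig y)
    (hz : ES.IsConfig z) : ES.IsConfig (latticeMedian x y z) := by
  refine ⟨?_, ?_, ?_⟩
  · exact ((hx.1.inter_of_left y).union (hy.1.inter_of_left z)).union (hz.1.inter_of_left x)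
  · have hlower : IsLowerSet (x ∩ y ∪ y ∩ z ∪ z ∩ x) :=
      ((hx.isLowerSet.inter hy.isLowerSet).union (hy.isLowerSet.inter hz.isLowerSet)).union
        (hz.isLowerSet.inter hx.isLowerSet)
    exact fun e he e' hle => hlower hle he
  · intro e he e' he'
    have hcommon : (e ∈ x ∧ e' ∈ x) ∨ (e ∈ y ∧ e' ∈ y) ∨ (e ∈ z ∧ e' ∈ z) := by
      simp only [latticeMedian, Set.sup_eq_union, Set.inf_eq_inter, Set.mem_union,
        Set.mem_inter_iff] at he he'
      tauto
    rcases hcommon with ⟨h, h'⟩ | ⟨h, h'⟩ | ⟨h, h'⟩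
    · exact hx.2.2 e h e' h'
    · exact hy.2.2 e h e' h'
    · exact hz.2.2 e h e' h'

theorem isWellGraded_domainGraph (ES : EventStructure) :
    IsWellGraded (domainGraph ES) (Subtype.val : ES.Config → Set ES.E) where
  adj_iff c d := by
    simp only [domainGraph, symmDiff_eq_singleton_iff, exists_or]
  finite_symmDiff c d := c.2.1.symmDiff d.2.1
  exists_step c d hne := by
    by_cases hcd : c.1 ⊆ d.1
    · obtain ⟨e, he, hconfig⟩ :=
        d.2.exists_insert c.2.isLowerSet (hcd.ssubset_of_ne (Subtype.coe_injective.ne hne))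
      refine ⟨⟨_, hconfig⟩, e, Or.inr he, ?_⟩
      exact symmDiff_eq_singleton_iff.2 (Or.inl ⟨he.2, rfl⟩)
    · obtain ⟨e, he, hconfig⟩ := c.2.exists_sdiff_singleton d.2.isLowerSet hcd
      refine ⟨⟨_, hconfig⟩, e, Or.inl he, ?_⟩
      exact symmDiff_eq_singleton_iff.2
        (Or.inr ⟨fun h => h.2 rfl, (Set.insert_sdiff_self_of_mem he.1).symm⟩)

end EventStructure

/-- The undirected Hasse diagram of the domain of any event structure is a median
graph. -/
theorem domainGraph_isMedian (ES : EventStructure) :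
    IsMedianGraph (domainGraph ES) :=
  domainGraph_isMedian_general ES.isWellGraded_domainGraph
    fun x y z => ⟨⟨_, x.2.median y.2 z.2⟩, rfl⟩
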